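/- arXiv:1805.09956 — 2 statements merged into one kernel-verified Lean document; each statement's English description precedes it below -/
import Mathlib

section
/- There is a universal constant c > 0 such that the following holds. Let G be the ℓ×ℓ grid, let δ ≥ 1 be an integer, and let M be a set of demand pairs, with all sources distinct and all destinations distinct, such that every source of M lies at distance at most δ from the boundary Γ(G). For each source s, let s̃ be a fixed vertex of Γ(G) at minimum distance from s, and let M̃ = {(s̃,t) : (s,t) ∈ M}. Then OPT(G,M̃) ≥ c·OPT(G,M)/δ. -/
open Finset

abbrev Vtx := ℕ × ℕ
abbrev DPair := Vtx × Vtx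

/-- The grid graph on rows `r₁..r₂` and columns `c₁..c₂` (vertices outside are isolated). -/
def rectGrid (r₁ r₂ c₁ c₂ : ℕ) : SimpleGraph Vtx :=
  SimpleGraph.fromRel (fun u v =>
    r₁ ≤ u.1 ∧ u.1 ≤ r₂ ∧ c₁ ≤ u.2 ∧ u.2 ≤ c₂ ∧
    r₁ ≤ v.1 ∧ v.1 ≤ r₂ ∧ c₁ ≤ v.2 ∧ v.2 ≤ c₂ ∧
    ((u.1 = v.1 ∧ u.2 + 1 = v.2) ∨ (u.2 = v.2 ∧ u.1 + 1 = v.1)))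

/-- The ℓ×ℓ grid graph. -/
def gridG (ℓ : ℕ) : SimpleGraph Vtx := rectGrid 1 ℓ 1 ℓ

/-- The demand pairs of `M` can be simultaneously routed via node-disjoint paths in `G`. -/
def NodeDisjointRoutable {V : Type*} (G : SimpleGraph V) (M : Finset (V × V)) : Prop :=
  ∃ P : ∀ m : {m // m ∈ M}, G.Walk m.val.1 m.val.2,
    (∀ m, (P m).IsPath) ∧
    ∀ m m' : {m // m ∈ M}, m ≠ m' → ∀ x, x ∈ (P m).support → x ∉ (P m').support

def OnTopRow (ℓ : ℕ) (v : Vtx) : Prop := v.1 = 1 ∧ 1 ≤ v.2 ∧ v.2 ≤ ℓ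

def OnBoundary (ℓ : ℕ) (v : Vtx) : Prop :=
  1 ≤ v.1 ∧ v.1 ≤ ℓ ∧ 1 ≤ v.2 ∧ v.2 ≤ ℓ ∧ (v.1 = 1 ∨ v.1 = ℓ ∨ v.2 = 1 ∨ v.2 = ℓ)

def DistinctSources (M : Finset DPair) : Prop := ∀ m ∈ M, ∀ m' ∈ M, m.1 = m'.1 → m = m'
def DistinctDests (M : Finset DPair) : Prop := ∀ m ∈ M, ∀ m' ∈ M, m.2 = m'.2 → m = m'

noncomputable def lg (n : ℕ) : ℝ := Real.logb 2 n

def IsIntervalIn (W : ℕ) (I : Finset ℕ) : Prop :=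
  ∃ a b : ℕ, 1 ≤ a ∧ a ≤ b ∧ b ≤ W ∧ I = Finset.Icc a b

def IntSeparated (d : ℕ) (I J : Finset ℕ) : Prop :=
  ∀ i ∈ I, ∀ j ∈ J, (d : ℤ) < |(i : ℤ) - (j : ℤ)|

def IsCanonicalIntervals (W d : ℕ) (Is : Finset (Finset ℕ)) : Prop :=
  (∀ I ∈ Is, IsIntervalIn W I ∧ I.card = d) ∧
    ∀ I ∈ Is, ∀ J ∈ Is, I ≠ J → IntSeparated d I J

abbrev SquareSpec := Finset ℕ × Finset ℕ

def memSquare (v : Vtx) (Q : SquareSpec) : Prop := v.1 ∈ Q.1 ∧ v.2 ∈ Q.2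

instance (v : Vtx) (Q : SquareSpec) : Decidable (memSquare v Q) := by
  unfold memSquare; infer_instance

def IsCanonicalSquares (W d : ℕ) (Qs : Finset SquareSpec) : Prop :=
  ∃ I₁ I₂ : Finset (Finset ℕ),
    IsCanonicalIntervals W d I₁ ∧ IsCanonicalIntervals W d I₂ ∧ Qs = I₁ ×ˢ I₂

/-- The number of sources of `M` lying on the shadow of the square `Q` with respect to `M`,
i.e. on the shortest sub-path of the top row containing all sources of pairs of `M` whose
destination lies in `Q`. -/
def shadowCount (M : Finset DPair) (Q : SquareSpec) : ℕ :=
  (M.filter (fun m => ∃ m₁ ∈ M, memSquare m₁.2 Q ∧ ∃ m₂ ∈ M, memSquare m₂.2 Q ∧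
      m₁.1.2 ≤ m.1.2 ∧ m.1.2 ≤ m₂.1.2)).card

/-- The square `Q` (of side `d`) has the β-shadow property with respect to `M`. -/
def HasShadowProp (β : ℝ) (d : ℕ) (M : Finset DPair) (Q : SquareSpec) : Prop :=
  (shadowCount M Q : ℝ) ≤ β * d

/-- Optimal value of the node-disjoint paths problem. -/
noncomputable def OPTn {V : Type*} (G : SimpleGraph V) (M : Finset (V × V)) : ℕ :=
  sSup {k | ∃ M' ⊆ M, M'.card = k ∧ NodeDisjointRoutable G M'}

def InGrid (ℓ : ℕ) (v : Vtx) : Prop := 1 ≤ v.1 ∧ v.1 ≤ ℓ ∧ 1 ≤ v.2 ∧ v.2 ≤ ℓ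

/-!
Fix an optimal routing `P` of `k` pairs of `M`, and for every routed pair `(s, t)` a shortest path
`Q` from `s` to `s̃`. It has at most `δ` vertices other than `s`, and `s` lies on the path of its
own pair, so `Q` meets at most `δ` of the paths of the other pairs, as those are disjoint. A
digraph of out-degree at most `δ` on `k` vertices has an independent set of size at least
`k / (2δ + 1)`: hence that many pairs are such that `Q` of one never meets `P` of another. Neither
do their `Q`s meet each other: the distance to the boundary grows at unit rate along each `Q`
traversed backwards, and from a given vertex this can go on in one direction only, so of two
meeting paths `Q` one runs through the source of the other. Therefore the walks `Q ∪ P` route the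
relocated pairs disjointly.
-/

section SparseDigraph

variable {ι : Type*} {R : ι → ι → Prop} [DecidableRel R] {S : Finset ι} {d : ℕ}

lemma exists_indegree_le_of_outdegree_le (hS : S.Nonempty) (hR : ∀ i ∈ S, #{j ∈ S | R i j} ≤ d) :
    ∃ v ∈ S, #{i ∈ S | R i v} ≤ d := by
  refine exists_le_of_sum_le hS ?_
  calc ∑ v ∈ S, #{i ∈ S | R i v} = ∑ i ∈ S, #{j ∈ S | R i j} :=
        (sum_card_bipartiteAbove_eq_sum_card_bipartiteBelow R).symm
    _ ≤ ∑ _ ∈ S, d := sum_le_sum hR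

theorem exists_subset_pairwise_not_of_outdegree_le (hR : ∀ i ∈ S, #{j ∈ S | R i j} ≤ d) :
    ∃ I ⊆ S, #S ≤ (2 * d + 1) * #I ∧ (I : Set ι).Pairwise fun i j => ¬ R i j := by
  classical
  induction S using Finset.strongInduction with
  | H S ih =>
    rcases S.eq_empty_or_nonempty with rfl | hS
    · exact ⟨∅, by simp⟩
    obtain ⟨v, hv, hin⟩ := exists_indegree_le_of_outdegree_le hS hR
    set N := insert v ({j ∈ S | R v j} ∪ {i ∈ S | R i v}) with hN
    have hNcard : #N ≤ 2 * d + 1 := by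
      calc #N ≤ #({j ∈ S | R v j} ∪ {i ∈ S | R i v}) + 1 := card_insert_le _ _
        _ ≤ #{j ∈ S | R v j} + #{i ∈ S | R i v} + 1 := by gcongr; exact card_union_le _ _
        _ ≤ d + d + 1 := by gcongr; exact hR v hv
        _ = 2 * d + 1 := by rw [two_mul]
    have hvN : v ∈ N := mem_insert_self _ _
    have hlt : S \ N ⊂ S := ⟨sdiff_subset, fun h => (mem_sdiff.1 (h hv)).2 hvN⟩
    obtain ⟨I, hIS, hcard, hI⟩ := ih (S \ N) hlt fun i hi =>
      (card_le_card (filter_subset_filter _ hlt.1)).trans (hR i (hlt.1 hi))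
    have hfar : ∀ i ∈ I, i ≠ v ∧ ¬ R v i ∧ ¬ R i v := by
      intro i hi
      have := mem_sdiff.1 (hIS hi)
      simp only [hN, mem_insert, mem_union, mem_filter] at this
      tauto
    refine ⟨insert v I, insert_subset hv (hIS.trans sdiff_subset), ?_, ?_⟩
    · calc #S ≤ #(S \ N) + #N := card_le_card_sdiff_add_card
        _ ≤ (2 * d + 1) * #I + (2 * d + 1) := add_le_add hcard hNcard
        _ = (2 * d + 1) * #(insert v I) := by
          rw [card_insert_of_notMem fun h => (hfar v h).1 rfl, mul_add_one]
    · rw [coe_insert]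
      exact hI.insert fun i hi _ => (hfar i hi).2

end SparseDigraph

section Rerouting

variable {V : Type*} {G : SimpleGraph V}

lemma bddAbove_card_routable (G : SimpleGraph V) (M : Finset (V × V)) :
    BddAbove {k | ∃ M' ⊆ M, #M' = k ∧ NodeDisjointRoutable G M'} := by
  refine ⟨#M, ?_⟩
  rintro _ ⟨M', hM', rfl, -⟩
  exact card_le_card hM'

lemma nodeDisjointRoutable_empty (G : SimpleGraph V) : NodeDisjointRoutable G ∅ :=
  ⟨fun m => absurd m.2 (notMem_empty _), fun m => absurd m.2 (notMem_empty _),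
    fun m => absurd m.2 (notMem_empty _)⟩

lemma exists_routable_card_eq_OPTn (G : SimpleGraph V) (M : Finset (V × V)) :
    ∃ M' ⊆ M, #M' = OPTn G M ∧ NodeDisjointRoutable G M' :=
  Nat.sSup_mem (s := {k | ∃ M' ⊆ M, #M' = k ∧ NodeDisjointRoutable G M'})
    ⟨0, ∅, empty_subset M, rfl, nodeDisjointRoutable_empty G⟩ (bddAbove_card_routable G M)

lemma NodeDisjointRoutable.card_le_OPTn {M M' : Finset (V × V)} (h : NodeDisjointRoutable G M')
    (hM' : M' ⊆ M) : #M' ≤ OPTn G M :=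
  le_csSup (bddAbove_card_routable G M) ⟨M', hM', rfl, h⟩

lemma card_le_OPTn_of_disjoint_walks {ι : Type*} {M : Finset (V × V)} {I : Finset ι}
    {s t : ι → V} (W : ∀ i, G.Walk (s i) (t i)) (hM : ∀ i ∈ I, (s i, t i) ∈ M)
    (hW : (I : Set ι).Pairwise fun i j => (W i).support.Disjoint (W j).support) :
    #I ≤ OPTn G M := by
  classical
  have hinj : Set.InjOn (fun i => (s i, t i)) I := by
    intro i hi j hj hij
    by_contra hne
    refine hW hi hj hne (W i).start_mem_support ?_
    have hs : s i = s j := (Prod.ext_iff.1 hij).1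
    rw [hs]
    exact (W j).start_mem_support
  have hroute : NodeDisjointRoutable G (I.image fun i => (s i, t i)) := by
    have hpre : ∀ m : {m // m ∈ I.image fun i => (s i, t i)}, ∃ i ∈ I, (s i, t i) = m.1 :=
      fun m => mem_image.1 m.2
    choose f hfI hf using hpre
    refine ⟨fun m => (W (f m)).bypass.copy (Prod.ext_iff.1 (hf m)).1 (Prod.ext_iff.1 (hf m)).2,
      fun m => ?_, fun m m' hne x hx hx' => ?_⟩
    · rw [SimpleGraph.Walk.isPath_copy]
      exact (W (f m)).bypass_isPath
    · rw [SimpleGraph.Walk.support_copy] at hx hx'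
      have hf_ne : f m ≠ f m' := fun he => hne (Subtype.ext (by rw [← hf m, ← hf m', he]))
      exact hW (hfI m) (hfI m') hf_ne ((W _).support_bypass_subset_support hx)
        ((W _).support_bypass_subset_support hx')
  rw [← card_image_of_injOn hinj]
  exact hroute.card_le_OPTn (image_subset_iff.2 hM)

lemma card_filter_meets_le_length {ι : Type*} {S : Finset ι} {A : ι → List V}
    (hA : (S : Set ι).Pairwise fun i j => (A i).Disjoint (A j)) (l : List V)
    [DecidablePred fun j => ∃ x ∈ l, x ∈ A j] :
    #{j ∈ S | ∃ x ∈ l, x ∈ A j} ≤ l.length := by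
  classical
  refine (card_le_card_of_forall_subsingleton (t := l.toFinset) (fun j x => x ∈ A j) ?_ ?_).trans
    l.toFinset_card_le
  · simp only [mem_filter, List.mem_toFinset]
    exact fun j hj => hj.2
  · rintro x - j ⟨hj, hxj⟩ k ⟨hk, hxk⟩
    by_contra hne
    exact hA (mem_filter.1 hj).1 (mem_filter.1 hk).1 hne hxj hxk

lemma disjoint_support_reverse_append {s t b s' t' b' : V} {q : G.Walk s b} {p : G.Walk s t}
    {q' : G.Walk s' b'} {p' : G.Walk s' t'} (hp : p.support.Disjoint p'.support)
    (hqp : q.support.Disjoint p'.support) (hqp' : q'.support.Disjoint p.support)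
    (hq : ∀ x ∈ q.support, x ∈ q'.support → s ∈ q'.support ∨ s' ∈ q.support) :
    (q.reverse.append p).support.Disjoint (q'.reverse.append p').support := by
  intro x hx hx'
  simp only [SimpleGraph.Walk.mem_support_append_iff, SimpleGraph.Walk.support_reverse,
    List.mem_reverse] at hx hx'
  rcases hx with hxq | hxp <;> rcases hx' with hxq' | hxp'
  · rcases hq x hxq hxq' with hs | hs'
    · exact hqp' hs p.start_mem_support
    · exact hqp hs' p'.start_mem_support
  · exact hqp hxq hxp'
  · exact hqp' hxq' hxp
  · exact hp hxp hxp'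

theorem OPTn_le_mul_OPTn_relocate [DecidableEq V] {M : Finset (V × V)} {f : V × V → V} {d : ℕ}
    (Q : ∀ p ∈ M, G.Walk p.1 (f p)) (hlen : ∀ p hp, (Q p hp).length ≤ d)
    (hmeet : ∀ p hp p' hp', ∀ x ∈ (Q p hp).support, x ∈ (Q p' hp').support →
      p.1 ∈ (Q p' hp').support ∨ p'.1 ∈ (Q p hp).support) :
    OPTn G M ≤ (2 * d + 1) * OPTn G (M.image fun p => (f p, p.2)) := by
  classical
  obtain ⟨M', hM', hcard, P, -, hP⟩ := exists_routable_card_eq_OPTn G M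
  let q (i : {m // m ∈ M'}) := Q i.1 (hM' i.2)
  -- The source of `i` is left out: it lies on `P i`, hence on no other path.
  let Hits (i j : {m // m ∈ M'}) : Prop := ∃ x ∈ (q i).support.tail, x ∈ (P j).support
  have hout : ∀ i ∈ univ, #{j | Hits i j} ≤ d := fun i _ =>
    (card_filter_meets_le_length (fun j _ k _ hjk => hP j k hjk) _).trans
      (by simpa [q] using hlen i.1 (hM' i.2))
  obtain ⟨I, -, hIcard, hI⟩ := exists_subset_pairwise_not_of_outdegree_le hout
  have hqP : (I : Set _).Pairwise fun i j => (q i).support.Disjoint (P j).support := by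
    intro i hi j hj hij x hx hxj
    rw [SimpleGraph.Walk.mem_support_iff] at hx
    rcases hx with rfl | hx
    · exact hP i j hij _ (P i).start_mem_support hxj
    · exact hI hi hj hij ⟨x, hx, hxj⟩
  have hIle : #I ≤ OPTn G (M.image fun p => (f p, p.2)) :=
    card_le_OPTn_of_disjoint_walks (fun i => (q i).reverse.append (P i))
      (fun i _ => mem_image_of_mem (fun p => (f p, p.2)) (hM' i.2))
      fun i hi j hj hij => disjoint_support_reverse_append (hP i j hij) (hqP hi hj hij)
        (hqP hj hi hij.symm) (hmeet i.1 (hM' i.2) j.1 (hM' j.2))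
  calc OPTn G M = #(univ : Finset {m // m ∈ M'}) := by rw [← hcard, card_univ, Fintype.card_coe]
    _ ≤ (2 * d + 1) * #I := hIcard
    _ ≤ (2 * d + 1) * OPTn G (M.image fun p => (f p, p.2)) := Nat.mul_le_mul_left _ hIle

end Rerouting

section GridDistance

variable {ℓ : ℕ} {u v x : Vtx}

/-- The L1 distance of two vertices, which is their graph distance in every grid containing them. -/
def l1Dist (u v : Vtx) : ℕ := Nat.dist u.1 v.1 + Nat.dist u.2 v.2

lemma l1Dist_triangle (u w v : Vtx) : l1Dist u v ≤ l1Dist u w + l1Dist w v := by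
  have hrow := Nat.dist.triangle_inequality u.1 w.1 v.1
  have hcol := Nat.dist.triangle_inequality u.2 w.2 v.2
  simp only [l1Dist]
  omega

lemma l1Dist_eq_one_iff : l1Dist u v = 1 ↔
    (u.1 = v.1 ∧ (u.2 + 1 = v.2 ∨ v.2 + 1 = u.2)) ∨
      (u.2 = v.2 ∧ (u.1 + 1 = v.1 ∨ v.1 + 1 = u.1)) := by
  simp only [l1Dist, Nat.dist]
  omega

lemma gridG_adj_iff : (gridG ℓ).Adj u v ↔ InGrid ℓ u ∧ InGrid ℓ v ∧ l1Dist u v = 1 := by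
  rw [l1Dist_eq_one_iff]
  simp only [gridG, rectGrid, SimpleGraph.fromRel_adj, InGrid, ne_eq, Prod.ext_iff]
  omega

lemma mem_uIcc_iff_coords : x ∈ uIcc u v ↔
    (min u.1 v.1 ≤ x.1 ∧ min u.2 v.2 ≤ x.2) ∧ x.1 ≤ max u.1 v.1 ∧ x.2 ≤ max u.2 v.2 :=
  mem_uIcc

lemma l1Dist_add_l1Dist_of_mem_uIcc (hx : x ∈ uIcc u v) :
    l1Dist u x + l1Dist x v = l1Dist u v := by
  rw [mem_uIcc_iff_coords] at hx
  simp only [l1Dist, Nat.dist]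
  omega

lemma l1Dist_le_length (p : (gridG ℓ).Walk u v) : l1Dist u v ≤ p.length := by
  induction p with
  | nil => simp [l1Dist]
  | @cons u w v h p ih =>
    have huw := (gridG_adj_iff.1 h).2.2
    have htri := l1Dist_triangle u w v
    rw [SimpleGraph.Walk.length_cons]
    omega

lemma exists_adj_l1Dist_add_one (hu : InGrid ℓ u) (hv : InGrid ℓ v) (huv : u ≠ v) :
    ∃ w, (gridG ℓ).Adj u w ∧ l1Dist w v + 1 = l1Dist u v := by
  obtain ⟨a, b⟩ := u
  obtain ⟨c, d⟩ := v
  simp only [gridG_adj_iff, InGrid, l1Dist, Nat.dist, ne_eq, Prod.mk.injEq] at *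
  rcases lt_trichotomy a c with hac | hac | hac
  · exact ⟨(a + 1, b), by dsimp only; omega⟩
  · rcases lt_or_ge b d with hbd | hbd
    · exact ⟨(a, b + 1), by dsimp only; omega⟩
    · exact ⟨(a, b - 1), by dsimp only; omega⟩
  · exact ⟨(a - 1, b), by dsimp only; omega⟩

lemma exists_walk_length_eq_l1Dist (hu : InGrid ℓ u) (hv : InGrid ℓ v) :
    ∃ p : (gridG ℓ).Walk u v, p.length = l1Dist u v := by
  induction hn : l1Dist u v generalizing u with
  | zero =>
    obtain rfl : u = v := by
      simp only [l1Dist, Nat.dist] at hn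
      ext <;> omega
    exact ⟨.nil, rfl⟩
  | succ n ih =>
    have huv : u ≠ v := by
      rintro rfl
      simp [l1Dist] at hn
    obtain ⟨w, huw, hwv⟩ := exists_adj_l1Dist_add_one hu hv huv
    obtain ⟨p, hp⟩ := ih (gridG_adj_iff.1 huw).2.1 (by omega)
    exact ⟨.cons huw p, by rw [SimpleGraph.Walk.length_cons, hp]⟩

lemma gridG_dist (hu : InGrid ℓ u) (hv : InGrid ℓ v) : (gridG ℓ).dist u v = l1Dist u v := by
  obtain ⟨p, hp⟩ := exists_walk_length_eq_l1Dist hu hv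
  obtain ⟨q, hq⟩ := p.reachable.exists_walk_length_eq_dist
  exact le_antisymm (hp ▸ SimpleGraph.dist_le p) (hq ▸ l1Dist_le_length q)

lemma uIcc_eq_insert_of_collinear {w : Vtx} (huv : u.1 = v.1 ∨ u.2 = v.2) (huw : l1Dist u w = 1)
    (hwv : l1Dist w v + 1 = l1Dist u v) :
    (w.1 = v.1 ∨ w.2 = v.2) ∧ uIcc u v = insert u (uIcc w v) := by
  have hstep : (w.1 = u.1 ∧ u.1 = v.1 ∧
        (u.2 < v.2 ∧ w.2 = u.2 + 1 ∨ v.2 < u.2 ∧ w.2 + 1 = u.2)) ∨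
      (w.2 = u.2 ∧ u.2 = v.2 ∧
        (u.1 < v.1 ∧ w.1 = u.1 + 1 ∨ v.1 < u.1 ∧ w.1 + 1 = u.1)) := by
    simp only [l1Dist, Nat.dist] at huw hwv
    rcases huv with huv | huv
    · left
      omega
    · right
      omega
  clear huv huw hwv
  refine ⟨by omega, ?_⟩
  ext x
  rw [mem_insert, mem_uIcc_iff_coords, mem_uIcc_iff_coords, Prod.ext_iff]
  rcases hstep with ⟨h₁, h₂, h | h⟩ | ⟨h₁, h₂, h | h⟩ <;> omega

lemma mem_support_iff_mem_uIcc_of_collinear (huv : u.1 = v.1 ∨ u.2 = v.2)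
    (p : (gridG ℓ).Walk u v) (hp : p.length = l1Dist u v) :
    x ∈ p.support ↔ x ∈ uIcc u v := by
  induction p with
  | nil => simp
  | @cons u w v h p ih =>
    have huw := (gridG_adj_iff.1 h).2.2
    have hpw := l1Dist_le_length p
    rw [SimpleGraph.Walk.length_cons] at hp
    have hstep : l1Dist w v + 1 = l1Dist u v := by
      have htri := l1Dist_triangle u w v
      omega
    obtain ⟨hwv, hseg⟩ := uIcc_eq_insert_of_collinear huv huw hstep
    rw [SimpleGraph.Walk.support_cons, List.mem_cons, ih hwv (by omega), hseg, mem_insert]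

end GridDistance

section Depth

variable {ℓ : ℕ} {s b x : Vtx}

/-- The distance of a vertex of the `ℓ × ℓ` grid from the boundary, that is, from the nearest of the
four sides. The subtractions truncate, so it is `0` off the grid. -/
def depth (ℓ : ℕ) (v : Vtx) : ℕ := min (min (v.1 - 1) (ℓ - v.1)) (min (v.2 - 1) (ℓ - v.2))

lemma le_depth_iff {n : ℕ} {v : Vtx} :
    n ≤ depth ℓ v ↔ (n ≤ v.1 - 1 ∧ n ≤ ℓ - v.1) ∧ n ≤ v.2 - 1 ∧ n ≤ ℓ - v.2 := by
  simp only [depth, le_min_iff]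

lemma depth_eq_or (ℓ : ℕ) (v : Vtx) : depth ℓ v = v.1 - 1 ∨ depth ℓ v = ℓ - v.1 ∨
    depth ℓ v = v.2 - 1 ∨ depth ℓ v = ℓ - v.2 := by
  simp only [depth]
  omega

lemma OnBoundary.inGrid (hb : OnBoundary ℓ b) : InGrid ℓ b :=
  ⟨hb.1, hb.2.1, hb.2.2.1, hb.2.2.2.1⟩

lemma depth_le_depth_add_l1Dist (u v : Vtx) : depth ℓ u ≤ depth ℓ v + l1Dist u v := by
  have hu := le_depth_iff.1 (le_refl (depth ℓ u))
  rw [← Nat.sub_le_iff_le_add, le_depth_iff]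
  simp only [l1Dist, Nat.dist]
  omega

lemma OnBoundary.depth_eq_zero (hb : OnBoundary ℓ b) : depth ℓ b = 0 := by
  simp only [OnBoundary, depth] at *
  omega

lemma exists_onBoundary_l1Dist_eq_depth (hs : InGrid ℓ s) :
    ∃ b, OnBoundary ℓ b ∧ l1Dist s b = depth ℓ s := by
  simp only [InGrid, OnBoundary, l1Dist, Nat.dist] at *
  rcases depth_eq_or ℓ s with h | h | h | h
  · exact ⟨(1, s.2), by dsimp only; omega⟩
  · exact ⟨(ℓ, s.2), by dsimp only; omega⟩
  · exact ⟨(s.1, 1), by dsimp only; omega⟩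
  · exact ⟨(s.1, ℓ), by dsimp only; omega⟩

lemma depth_eq_add_of_mem_uIcc (hb : OnBoundary ℓ b) (hsb : l1Dist s b = depth ℓ s)
    (hx : x ∈ uIcc s b) : depth ℓ s = depth ℓ x + l1Dist s x := by
  have hadd := l1Dist_add_l1Dist_of_mem_uIcc hx
  have hs := depth_le_depth_add_l1Dist (ℓ := ℓ) s x
  have hxb := depth_le_depth_add_l1Dist (ℓ := ℓ) x b
  rw [hb.depth_eq_zero] at hxb
  omega

lemma perpendicular_of_depth_eq_add (hs : depth ℓ s = depth ℓ x + l1Dist s x) :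
    (depth ℓ x = x.1 - 1 → s.2 = x.2 ∧ x.1 ≤ s.1) ∧
    (depth ℓ x = ℓ - x.1 → s.2 = x.2 ∧ s.1 ≤ x.1) ∧
    (depth ℓ x = x.2 - 1 → s.1 = x.1 ∧ x.2 ≤ s.2) ∧
    (depth ℓ x = ℓ - x.2 → s.1 = x.1 ∧ s.2 ≤ x.2) := by
  have hs_le := le_depth_iff.1 hs.ge
  clear hs
  simp only [l1Dist, Nat.dist] at hs_le
  refine ⟨?_, ?_, ?_, ?_⟩ <;> intro hx <;> rw [hx] at hs_le <;> omega

lemma mem_uIcc_or_mem_uIcc_of_depth_eq_add {s' : Vtx} (hs : depth ℓ s = depth ℓ x + l1Dist s x)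
    (hs' : depth ℓ s' = depth ℓ x + l1Dist s' x) : s ∈ uIcc s' x ∨ s' ∈ uIcc s x := by
  obtain ⟨htop, hbottom, hleft, hright⟩ := perpendicular_of_depth_eq_add hs
  obtain ⟨htop', hbottom', hleft', hright'⟩ := perpendicular_of_depth_eq_add hs'
  rw [mem_uIcc_iff_coords, mem_uIcc_iff_coords]
  clear hs hs'
  rcases depth_eq_or ℓ x with hx | hx | hx | hx
  · specialize htop hx
    specialize htop' hx
    omega
  · specialize hbottom hx
    specialize hbottom' hx
    omega
  · specialize hleft hx
    specialize hleft' hx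
    omega
  · specialize hright hx
    specialize hright' hx
    omega

lemma collinear_of_l1Dist_eq_depth (hb : OnBoundary ℓ b) (hsb : l1Dist s b = depth ℓ s) :
    s.1 = b.1 ∨ s.2 = b.2 := by
  have hs := le_depth_iff.1 hsb.le
  obtain ⟨-, -, -, -, hside⟩ := hb
  clear hsb
  simp only [l1Dist, Nat.dist] at *
  rcases hside with hside | hside | hside | hside <;> omega

/-- `b` is a vertex of the boundary `Γ(G)` at minimum distance from `s`; such a vertex is what the
relocation `s ↦ s̃` chooses. -/
def IsNearestOnBoundary (ℓ : ℕ) (s b : Vtx) : Prop :=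
  OnBoundary ℓ b ∧ ∀ b', OnBoundary ℓ b' → (gridG ℓ).dist s b ≤ (gridG ℓ).dist s b'

lemma IsNearestOnBoundary.l1Dist_eq_depth (h : IsNearestOnBoundary ℓ s b) (hs : InGrid ℓ s) :
    l1Dist s b = depth ℓ s := by
  obtain ⟨hb, hmin⟩ := h
  obtain ⟨b', hb', hsb'⟩ := exists_onBoundary_l1Dist_eq_depth hs
  have hle := hmin b' hb'
  rw [gridG_dist hs hb.inGrid, gridG_dist hs hb'.inGrid, hsb'] at hle
  refine le_antisymm hle ?_
  simpa [hb.depth_eq_zero] using depth_le_depth_add_l1Dist (ℓ := ℓ) s b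

lemma IsNearestOnBoundary.mem_uIcc_or_mem_uIcc {s' b' : Vtx} (h : IsNearestOnBoundary ℓ s b)
    (h' : IsNearestOnBoundary ℓ s' b') (hs : InGrid ℓ s) (hs' : InGrid ℓ s')
    (hx : x ∈ uIcc s b) (hx' : x ∈ uIcc s' b') : s ∈ uIcc s' b' ∨ s' ∈ uIcc s b := by
  have hdepth := depth_eq_add_of_mem_uIcc h.1 (h.l1Dist_eq_depth hs) hx
  have hdepth' := depth_eq_add_of_mem_uIcc h'.1 (h'.l1Dist_eq_depth hs') hx'
  exact (mem_uIcc_or_mem_uIcc_of_depth_eq_add hdepth hdepth').imp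
    (fun hmem => uIcc_subset_uIcc_left hx' hmem) (fun hmem => uIcc_subset_uIcc_left hx hmem)

lemma IsNearestOnBoundary.exists_walk_support_eq_uIcc (h : IsNearestOnBoundary ℓ s b)
    (hs : InGrid ℓ s) :
    ∃ q : (gridG ℓ).Walk s b, q.length = (gridG ℓ).dist s b ∧
      ∀ x, x ∈ q.support ↔ x ∈ uIcc s b := by
  obtain ⟨q, hq⟩ := exists_walk_length_eq_l1Dist hs h.1.inGrid
  exact ⟨q, hq.trans (gridG_dist hs h.1.inGrid).symm, fun x =>
    mem_support_iff_mem_uIcc_of_collinear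
      (collinear_of_l1Dist_eq_depth h.1 (h.l1Dist_eq_depth hs)) q hq⟩

end Depth

theorem gridG_OPTn_le_mul_OPTn_relocate {ℓ δ : ℕ} {M : Finset DPair}
    (hM : ∀ p ∈ M, InGrid ℓ p.1) {tilde : DPair → Vtx}
    (hnear : ∀ p ∈ M, IsNearestOnBoundary ℓ p.1 (tilde p))
    (hδ : ∀ p ∈ M, (gridG ℓ).dist p.1 (tilde p) ≤ δ) :
    OPTn (gridG ℓ) M ≤ (2 * δ + 1) * OPTn (gridG ℓ) (M.image fun p => (tilde p, p.2)) := by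
  choose! Q hlen hsupp using fun p hp => (hnear p hp).exists_walk_support_eq_uIcc (hM p hp)
  refine OPTn_le_mul_OPTn_relocate Q (fun p hp => (hlen p hp).trans_le (hδ p hp)) ?_
  intro p hp p' hp' x hx hx'
  rw [hsupp] at hx hx'
  rw [hsupp, hsupp]
  exact (hnear p hp).mem_uIcc_or_mem_uIcc (hnear p' hp') (hM p hp) (hM p' hp') hx hx'

theorem statement14_general :
    ∃ c : ℝ, 0 < c ∧ ∀ ℓ δ : ℕ, 1 ≤ δ →
      ∀ M : Finset DPair,
        (∀ p ∈ M, InGrid ℓ p.1) →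
        ∀ tilde : DPair → Vtx,
          (∀ p ∈ M, OnBoundary ℓ (tilde p) ∧
            (∀ b : Vtx, OnBoundary ℓ b →
              (gridG ℓ).dist p.1 (tilde p) ≤ (gridG ℓ).dist p.1 b) ∧
            (gridG ℓ).dist p.1 (tilde p) ≤ δ) →
          c * (OPTn (gridG ℓ) M : ℝ) / (δ : ℝ) ≤
            (OPTn (gridG ℓ) (M.image (fun p => (tilde p, p.2))) : ℝ) := by
  refine ⟨1 / 3, by norm_num, fun ℓ δ hδ M hM tilde ht => ?_⟩
  have hle : OPTn (gridG ℓ) M ≤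
      3 * δ * OPTn (gridG ℓ) (M.image fun p => (tilde p, p.2)) :=
    (gridG_OPTn_le_mul_OPTn_relocate hM (fun p hp => ⟨(ht p hp).1, (ht p hp).2.1⟩)
      fun p hp => (ht p hp).2.2).trans (Nat.mul_le_mul_right _ (by omega))
  have hle_real : (OPTn (gridG ℓ) M : ℝ) ≤
      3 * δ * OPTn (gridG ℓ) (M.image fun p => (tilde p, p.2)) := mod_cast hle
  rw [div_le_iff₀ (by positivity)]
  linarith

/-- Claim: relocating sources lying close to the grid boundary onto the
boundary loses at most a `δ` factor, up to a universal constant. -/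
theorem statement14 :
    ∃ c : ℝ, 0 < c ∧ ∀ ℓ δ : ℕ, 2 ≤ ℓ → 1 ≤ δ →
      ∀ M : Finset DPair,
        (∀ p ∈ M, InGrid ℓ p.1 ∧ InGrid ℓ p.2) →
        DistinctSources M → DistinctDests M →
        ∀ tilde : Vtx → Vtx,
          (∀ p ∈ M, OnBoundary ℓ (tilde p.1) ∧
            (∀ b : Vtx, OnBoundary ℓ b →
              (gridG ℓ).dist p.1 (tilde p.1) ≤ (gridG ℓ).dist p.1 b) ∧
            (gridG ℓ).dist p.1 (tilde p.1) ≤ δ) →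
          c * (OPTn (gridG ℓ) M : ℝ) / (δ : ℝ) ≤
            (OPTn (gridG ℓ) (M.image (fun p => (tilde p.1, p.2))) : ℝ) := by
  obtain ⟨c, hc, h⟩ := statement14_general
  exact ⟨c, hc, fun ℓ δ _ hδ M hM _ _ tilde ht =>
    h ℓ δ hδ M (fun p hp => (hM p hp).1) (fun p => tilde p.1) ht⟩
end

section
/- Let n ≥ 2 and ρ ≥ 1 be integers and let d₁ ≥ d₂ ≥ … ≥ d_ρ ≥ 2 be integers. Let U' be a finite set, and let P₁,…,P_ρ be partitions of U' such that P_{h+1} refines P_h for every 1 ≤ h < ρ, and such that for every 1 ≤ h ≤ ρ, every class of P_h has at most 64·d_h·(log₂ n)³ elements. Then there exists a subset U'' ⊆ U' with |U''| ≥ |U'|/(256·(log₂ n)⁴) such that for every 1 ≤ h ≤ ρ, every class of P_h contains at most d_h elements of U''. -/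
/-!
Since each labeling refines the previous ones, two elements agree at level `h` iff they agree at all
levels up to `h`; hence every class is convex in the lexicographic order on the sequences of labels,
with ties broken arbitrarily. Let `U''` consist of every `m`-th element of `U'` in this order, where
`m = ⌈64 (log₂ n)³⌉`. A convex set with at most `m * d` elements contains at most `d` elements of
`U''`, and `m * |U''| ≥ |U'|`. Since `log₂ n ≥ 1`, one has
`m ≤ 64 (log₂ n)³ + 1 ≤ 256 (log₂ n)⁴`.
-/

open Finset

section LexicographicOrder

variable {ι : Type*} [LinearOrder ι] [WellFoundedLT ι] {β : ι → Type*}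

lemma ordConnected_setOf_toLex_prefix_eq [∀ i, LinearOrder (β i)] (a : ∀ i, β i) (i : ι) :
    {x : Lex (∀ i, β i) | ∀ j ≤ i, ofLex x j = a j}.OrdConnected := by
  refine ⟨fun x hx y hy z ⟨hxz, hzy⟩ j => ?_⟩
  induction j using WellFoundedLT.induction with
  | ind j ih =>
    intro hji
    have hza : ∀ k < j, ofLex z k = a k := fun k hkj => ih k hkj (hkj.le.trans hji)
    have hxa : ∀ k < j, ofLex x k = a k := fun k hkj => hx k (hkj.le.trans hji)
    have hya : ∀ k < j, ofLex y k = a k := fun k hkj => hy k (hkj.le.trans hji)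
    apply le_antisymm
    · exact hy j hji ▸ Pi.apply_le_of_toLex hzy fun k hkj => (hza k hkj).trans (hya k hkj).symm
    · exact hx j hji ▸ Pi.apply_le_of_toLex hxz fun k hkj => (hxa k hkj).trans (hza k hkj).symm

lemma exists_linearOrder_monotone {α γ : Type*} [LinearOrder γ] (g : α → γ) :
    ∃ _ : LinearOrder α, Monotone g := by
  obtain ⟨tieBreak, -⟩ := exists_wellFoundedLT α
  let key : α → γ ×ₗ α := fun x => toLex (g x, x)
  have key_injective : Function.Injective key := fun _ _ h => congrArg (fun k => (ofLex k).2) h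
  have fst_monotone : Monotone fun k : γ ×ₗ α => (ofLex k).1 := Prod.Lex.monotone_fst_ofLex
  exact ⟨LinearOrder.lift' key key_injective, fun _ _ h => fst_monotone h⟩

theorem exists_linearOrder_forall_ordConnected_fiber {α : Type*} (f : ∀ i, α → β i)
    (hf : Antitone fun i => Setoid.ker (f i)) :
    ∃ _ : LinearOrder α, ∀ i y, (f i ⁻¹' {y}).OrdConnected := by
  let _ : ∀ i, LinearOrder (β i) := fun i => (exists_wellFoundedLT (β i)).choose
  obtain ⟨lexOrder, labels_monotone⟩ := exists_linearOrder_monotone fun x => toLex fun i => f i x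
  refine ⟨lexOrder, fun i y => ⟨fun a ha b hb c hc => ?_⟩⟩
  have prefix_eq_of_mem_fiber : ∀ x ∈ f i ⁻¹' {y}, ∀ j ≤ i, f j x = f j a :=
    fun x hx j hji => hf hji (hx.trans ha.symm)
  have prefix_class_ordConnected :=
    (ordConnected_setOf_toLex_prefix_eq (fun j => f j a) i).preimage_mono labels_monotone
  have hca := prefix_class_ordConnected.out (prefix_eq_of_mem_fiber a ha)
    (prefix_eq_of_mem_fiber b hb) hc
  exact (hca i le_rfl).trans ha

end LexicographicOrder

section EquallySpacedSubset

variable {α : Type*} {m : ℕ}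

lemma le_mul_card_filter_dvd_range (hm : 0 < m) (N : ℕ) : N ≤ m * #{i ∈ range N | m ∣ i} := by
  have hcount : (#{i ∈ range N | m ∣ i} : ℤ) = ⌈(N / m : ℚ)⌉ := by
    simpa [Nat.count_eq_card_filter_range, Nat.modEq_zero_iff_dvd] using
      Nat.count_modEq_card_eq_ceil N hm 0
  have hceil : (N / m : ℚ) ≤ #{i ∈ range N | m ∣ i} := by
    exact_mod_cast hcount ▸ Int.le_ceil (N / m : ℚ)
  rw [div_le_iff₀' (by positivity)] at hceil
  exact_mod_cast hceil

lemma mul_card_filter_dvd_Ico_lt (hm : 0 < m) (a b : ℕ) :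
    m * #{i ∈ Ico a b | m ∣ i} < #(Ico a b) + m := by
  rcases lt_or_ge b a with hba | hab
  · simp [Ico_eq_empty_of_le hba.le, hm]
  have hcount : (#{i ∈ Ico a b | m ∣ i} : ℤ) = ⌈(b / m : ℚ)⌉ - ⌈(a / m : ℚ)⌉ := by
    have hceil : ⌈(a / m : ℚ)⌉ ≤ ⌈(b / m : ℚ)⌉ := by gcongr
    simpa [Nat.modEq_zero_iff_dvd, hceil] using Nat.Ico_filter_modEq_card a b hm 0
  have hlt : (#{i ∈ Ico a b | m ∣ i} : ℚ) < (b - a) / m + 1 := by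
    have hcount' : (#{i ∈ Ico a b | m ∣ i} : ℚ) = ⌈(b / m : ℚ)⌉ - ⌈(a / m : ℚ)⌉ := by
      exact_mod_cast hcount
    rw [hcount', sub_div]
    linarith [Int.ceil_lt_add_one (b / m : ℚ), Int.le_ceil (a / m : ℚ)]
  have hmul : (m * #{i ∈ Ico a b | m ∣ i} : ℚ) < (b - a) + m := by
    calc (m * #{i ∈ Ico a b | m ∣ i} : ℚ) < m * ((b - a) / m + 1) := by gcongr
      _ = (b - a) + m := by field_simp
  rw [Nat.card_Ico, ← Nat.cast_lt (α := ℚ)]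
  push_cast [Nat.cast_sub hab]
  exact hmul

lemma eq_Icc_min'_max'_of_ordConnected [LinearOrder α] [LocallyFiniteOrder α] {s : Finset α}
    (hs : (s : Set α).OrdConnected) (hne : s.Nonempty) :
    s = Icc (s.min' hne) (s.max' hne) := by
  ext x
  rw [Finset.mem_Icc]
  exact ⟨fun hx => ⟨s.min'_le x hx, s.le_max' x hx⟩,
    fun hx => hs.out (s.min'_mem hne) (s.max'_mem hne) hx⟩

lemma mul_card_filter_dvd_lt_of_ordConnected (hm : 0 < m) {N : ℕ} {s : Finset (Fin N)}
    (hs : (s : Set (Fin N)).OrdConnected) : m * #{i ∈ s | m ∣ i.val} < #s + m := by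
  rcases s.eq_empty_or_nonempty with rfl | hne
  · simpa using hm
  have map_val : s.map Fin.valEmbedding = Ico (s.min' hne).val ((s.max' hne).val + 1) := by
    conv_lhs => rw [eq_Icc_min'_max'_of_ordConnected hs hne, Fin.map_valEmbedding_Icc]
    rfl
  have hlt := map_val ▸ mul_card_filter_dvd_Ico_lt hm (s.min' hne).val ((s.max' hne).val + 1)
  simpa only [filter_map, card_map, Function.comp_def, Fin.valEmbedding_apply] using hlt

theorem exists_subset_mul_card_filter_lt [LinearOrder α] (hm : 0 < m) (U : Finset α) :
    ∃ T ⊆ U, #U ≤ m * #T ∧ ∀ (p : α → Prop) [DecidablePred p], {x | p x}.OrdConnected →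
      m * #{x ∈ T | p x} < #{x ∈ U | p x} + m := by
  let enum : Fin #U ↪o α := U.orderEmbOfFin rfl
  have map_enum : univ.map enum.toEmbedding = U := U.map_orderEmbOfFin_univ rfl
  let multiples : Finset (Fin #U) := {i | m ∣ i.val}
  refine ⟨multiples.map enum.toEmbedding, ?_, ?_, fun p _ hp => ?_⟩
  · exact (map_subset_map.2 multiples.subset_univ).trans_eq map_enum
  · have map_val : multiples.map Fin.valEmbedding = {i ∈ range #U | m ∣ i} := by
      rw [← Nat.Iio_eq_range, ← Fin.map_valEmbedding_univ, filter_map]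
      rfl
    rw [card_map, ← card_map Fin.valEmbedding, map_val]
    exact le_mul_card_filter_dvd_range hm #U
  · have indices_ordConnected : (univ.filter (p ∘ enum) : Set (Fin #U)).OrdConnected := by
      simpa using hp.preimage_mono enum.monotone
    have hlt := mul_card_filter_dvd_lt_of_ordConnected hm indices_ordConnected
    rw [filter_comm] at hlt
    conv_rhs => rw [← map_enum, filter_map, card_map]
    rw [filter_map, card_map]
    exact hlt

end EquallySpacedSubset

theorem exists_subset_forall_mul_card_fiber_lt {ι α : Type*} [LinearOrder ι] [WellFoundedLT ι]
    {β : ι → Type*} [∀ i, DecidableEq (β i)] (f : ∀ i, α → β i)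
    (hf : Antitone fun i => Setoid.ker (f i)) (U : Finset α) {m : ℕ} (hm : 0 < m) :
    ∃ T ⊆ U, #U ≤ m * #T ∧ ∀ i y, m * #{x ∈ T | f i x = y} < #{x ∈ U | f i x = y} + m := by
  obtain ⟨_, fiber_ordConnected⟩ := exists_linearOrder_forall_ordConnected_fiber f hf
  obtain ⟨T, hTU, hcard, hlt⟩ := exists_subset_mul_card_filter_lt hm U
  exact ⟨T, hTU, hcard, fun i y => hlt (f i · = y) (fiber_ordConnected i y)⟩

theorem statement16_general {ι α : Type*} [LinearOrder ι] [WellFoundedLT ι]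
    {β : ι → Type*} [∀ i, DecidableEq (β i)] {n : ℝ} (hn : 2 ≤ n) (d : ι → ℕ) (U : Finset α)
    (f : ∀ i, α → β i) (hf : Antitone fun i => Setoid.ker (f i))
    (hclass : ∀ i y, (#{x ∈ U | f i x = y} : ℝ) ≤ 64 * d i * Real.logb 2 n ^ 3) :
    ∃ T ⊆ U, (#U : ℝ) / (256 * Real.logb 2 n ^ 4) ≤ #T ∧ ∀ i y, #{x ∈ T | f i x = y} ≤ d i := by
  have one_le_log : 1 ≤ Real.logb 2 n := by
    rwa [Real.le_logb_iff_rpow_le one_lt_two (by positivity), Real.rpow_one]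
  set L := Real.logb 2 n
  set m := ⌈64 * L ^ 3⌉₊
  have hm : 0 < m := Nat.ceil_pos.2 (by positivity)
  have m_le : (m : ℝ) ≤ 256 * L ^ 4 := by
    have hceil : (m : ℝ) < 64 * L ^ 3 + 1 := Nat.ceil_lt_add_one (by positivity)
    have hL3 : 1 ≤ L ^ 3 := one_le_pow₀ one_le_log
    have hL4 : L ^ 3 ≤ L ^ 4 := pow_le_pow_right₀ one_le_log (by norm_num)
    linarith
  obtain ⟨T, hTU, hcard, hlt⟩ := exists_subset_forall_mul_card_fiber_lt f hf U hm
  refine ⟨T, hTU, ?_, fun i y => ?_⟩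
  · rw [div_le_iff₀' (by positivity)]
    calc (#U : ℝ) ≤ m * #T := by exact_mod_cast hcard
      _ ≤ 256 * L ^ 4 * #T := by gcongr
  · have hle : #{x ∈ U | f i x = y} ≤ m * d i := by
      rify
      calc (#{x ∈ U | f i x = y} : ℝ) ≤ 64 * L ^ 3 * d i := by linarith [hclass i y]
        _ ≤ m * d i := by gcongr; exact Nat.le_ceil _
    have hlt' : m * #{x ∈ T | f i x = y} < m * (d i + 1) := by linarith [hlt i y]
    exact Nat.le_of_lt_succ (Nat.lt_of_mul_lt_mul_left hlt')

/-- Claim: turning an almost-feasible solution into a feasible one.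
The partitions `P₁,…,P_ρ` of `U'` are given by labeling functions `f 1, …, f ρ` (the
classes of `P_h` are the fibers of `f h` on `U'`); `P_{h+1}` refines `P_h`.
If every class of `P_h` has at most `64·d_h·(log₂ n)³` elements, then there is a subset
`U'' ⊆ U'` with `|U''| ≥ |U'|/(256·(log₂ n)⁴)` such that every class of `P_h` contains at
most `d_h` elements of `U''`. -/
theorem statement16 {α : Type*} [DecidableEq α]
    (n ρ : ℕ) (hn : 2 ≤ n) (hρ : 1 ≤ ρ)
    (d : ℕ → ℕ) (hd2 : ∀ h, 1 ≤ h → h ≤ ρ → 2 ≤ d h)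
    (hmono : ∀ h, 1 ≤ h → h < ρ → d (h + 1) ≤ d h)
    (U' : Finset α) (f : ℕ → α → ℕ)
    (hrefine : ∀ h, 1 ≤ h → h < ρ → ∀ a b : α,
      f (h + 1) a = f (h + 1) b → f h a = f h b)
    (hclass : ∀ h, 1 ≤ h → h ≤ ρ → ∀ y : ℕ,
      ((U'.filter (fun x => f h x = y)).card : ℝ) ≤
        64 * (d h : ℝ) * (Real.logb 2 n) ^ 3) :
    ∃ U'' ⊆ U', (U'.card : ℝ) / (256 * (Real.logb 2 n) ^ 4) ≤ (U''.card : ℝ) ∧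
      ∀ h, 1 ≤ h → h ≤ ρ → ∀ y : ℕ,
        (U''.filter (fun x => f h x = y)).card ≤ d h := by
  have antitone_ker : AntitoneOn (fun h => Setoid.ker (f h)) (Set.Icc 1 ρ) :=
    antitoneOn_of_succ_le Set.ordConnected_Icc fun h _ hh hsucc => hrefine h hh.1 hsucc.2
  simpa using statement16_general (by exact_mod_cast hn) (fun h : Set.Icc 1 ρ => d h) U'
    (fun h => f h) (Set.antitoneOn_iff_antitone.1 antitone_ker) fun h => hclass h h.2.1 h.2.2
end
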